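/- For every integrable random variable X, the φ-divergence risk measure satisfies the bounds E[X] ≤ ρ_{φ,β}(X) ≤ esssup(X), where esssup(X) denotes the essential supremum of X (the upper bound being trivially true when esssup(X) = ∞). In particular, ρ_{φ,β}(0) = 0. -/

import Mathlib

open MeasureTheory
open scoped ENNReal

noncomputable section

/-- A divergence function: convex, lower semicontinuous `φ : ℝ → ℝ ∪ {∞}` with `φ 1 = 0`,
effective domain `[0, ∞)` and superlinear growth `φ x / x → ∞` as `x → ∞`. -/
structure IsDivergenceFunction (φ : ℝ → EReal) : Prop where
  convex : ∀ x y a b : ℝ, 0 < a → 0 < b → a + b = 1 →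
    φ (a * x + b * y) ≤ (a : EReal) * φ x + (b : EReal) * φ y
  lsc : LowerSemicontinuous φ
  ne_bot : ∀ x : ℝ, φ x ≠ ⊥
  one : φ 1 = 0
  domain : ∀ x : ℝ, φ x ≠ ⊤ ↔ 0 ≤ x
  superlinear : ∀ M : ℝ, ∃ N : ℝ, ∀ x : ℝ, N ≤ x → ((M * x : ℝ) : EReal) ≤ φ x

/-- The convex conjugate `ψ(y) = sup_z (y·z − φ(z))`, as an extended real number. -/
def psiE (φ : ℝ → EReal) (y : ℝ) : EReal := ⨆ z : ℝ, (((y * z : ℝ) : EReal) - φ z)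

/-- The convex conjugate, as a real number (it is finite for divergence functions). -/
def psiR (φ : ℝ → EReal) (y : ℝ) : ℝ := (psiE φ y).toReal

open Classical in
/-- The objective `t (β + μ + E ψ(X/t − μ))` of the φ-divergence risk measure;
the value is `⊤` when `ψ(X/t − μ)` fails to be integrable. -/
def rhoObj {Ω : Type*} [MeasurableSpace Ω] (φ : ℝ → EReal) (β : ℝ) (P : Measure Ω)
    (X : Ω → ℝ) (μ t : ℝ) : EReal :=
  if Integrable (fun ω => psiR φ (X ω / t - μ)) P then
    (((t * (β + μ + ∫ ω, psiR φ (X ω / t - μ) ∂P)) : ℝ) : EReal)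
  else ⊤

/-- The φ-divergence risk measure `ρ_{φ,β}(X) = inf_{μ ∈ ℝ, t > 0} t (β + μ + E ψ(X/t − μ))`. -/
def rhoDiv {Ω : Type*} [MeasurableSpace Ω] (φ : ℝ → EReal) (β : ℝ) (P : Measure Ω)
    (X : Ω → ℝ) : EReal :=
  ⨅ (μ : ℝ) (t : ℝ) (_ : 0 < t), rhoObj φ β P X μ t

variable {Ω : Type*} [MeasurableSpace Ω]

/-- Existence of a subgradient of `φ` at `1`. -/
theorem IsDivergenceFunction.exists_subgrad {φ : ℝ → EReal} (hφ : IsDivergenceFunction φ) :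
    ∃ y₀ : ℝ, ∀ z : ℝ, ((y₀ * (z - 1) : ℝ) : EReal) ≤ φ z := by
  have hco : ∀ z : ℝ, 0 ≤ z → (((φ z).toReal : ℝ) : EReal) = φ z := fun z hz =>
    EReal.coe_toReal ((hφ.domain z).2 hz) (hφ.ne_bot z)
  have key : ∀ z w : ℝ, 0 ≤ z → z < 1 → 1 < w →
      (φ z).toReal / (z - 1) ≤ (φ w).toReal / (w - 1) := by
    intro z w hz hz1 hw
    have hwz : 0 < w - z := by linarith
    have h := hφ.convex z w ((w - 1) / (w - z)) ((1 - z) / (w - z))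
      (div_pos (by linarith) hwz) (div_pos (by linarith) hwz) (by field_simp; ring)
    have e : (w - 1) / (w - z) * z + (1 - z) / (w - z) * w = 1 := by field_simp; ring
    rw [e, hφ.one, ← hco z hz, ← hco w (by linarith)] at h
    have h' : (0 : ℝ) ≤ (w - 1) / (w - z) * (φ z).toReal + (1 - z) / (w - z) * (φ w).toReal := by
      exact_mod_cast h
    have h2 : (w - 1) / (w - z) * (φ z).toReal + (1 - z) / (w - z) * (φ w).toReal
        = ((w - 1) * (φ z).toReal + (1 - z) * (φ w).toReal) / (w - z) := by field_simp
    rw [h2, le_div_iff₀ hwz] at h'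
    rw [← neg_div_neg_eq, div_le_div_iff₀ (by linarith) (by linarith)]
    nlinarith
  set S : Set ℝ := (fun z : ℝ => (φ z).toReal / (z - 1)) '' Set.Ico 0 1 with hS
  have hne : S.Nonempty := ⟨_, 0, ⟨le_rfl, one_pos⟩, rfl⟩
  have hbd : BddAbove S := by
    refine ⟨(φ 2).toReal / (2 - 1), ?_⟩
    rintro _ ⟨z, hz, rfl⟩
    exact key z 2 hz.1 hz.2 (by norm_num)
  refine ⟨sSup S, fun z => ?_⟩
  rcases lt_or_ge z 0 with hz | hz
  · have : φ z = ⊤ := by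
      by_contra h
      exact absurd ((hφ.domain z).1 h) (not_le.2 hz)
    rw [this]; exact le_top
  rw [← hco z hz]
  rcases lt_trichotomy z 1 with h1 | h1 | h1
  · have h := le_csSup hbd (⟨z, ⟨hz, h1⟩, rfl⟩ : (φ z).toReal / (z - 1) ∈ S)
    rw [div_le_iff_of_neg (by linarith)] at h
    exact_mod_cast h
  · subst h1
    simp [hφ.one]
  · have h : sSup S ≤ (φ z).toReal / (z - 1) := by
      apply csSup_le hne
      rintro _ ⟨u, hu, rfl⟩
      exact key u z hu.1 hu.2 h1
    rw [le_div_iff₀ (by linarith)] at h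
    exact_mod_cast h

theorem psiE_le_of {φ : ℝ → EReal} (hφ : IsDivergenceFunction φ) (y c : ℝ)
    (h : ∀ z : ℝ, 0 ≤ z → ((y * z - c : ℝ) : EReal) ≤ φ z) : psiE φ y ≤ c := by
  refine iSup_le fun z => ?_
  rcases lt_or_ge z 0 with hz | hz
  · have : φ z = ⊤ := by
      by_contra h
      exact absurd ((hφ.domain z).1 h) (not_le.2 hz)
    rw [this]; simp
  · have h1 := h z hz
    rw [← EReal.coe_toReal ((hφ.domain z).2 hz) (hφ.ne_bot z)] at h1 ⊢
    have h2 : y * z - c ≤ (φ z).toReal := by exact_mod_cast h1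
    have h3 : y * z - (φ z).toReal ≤ c := by linarith
    exact_mod_cast h3

theorem le_psiE {φ : ℝ → EReal} (hφ : IsDivergenceFunction φ) (y : ℝ) : (y : EReal) ≤ psiE φ y := by
  have := le_iSup (fun z : ℝ => (((y * z : ℝ) : EReal) - φ z)) 1
  simpa [psiE, hφ.one] using this

theorem psiE_ne_top {φ : ℝ → EReal} (hφ : IsDivergenceFunction φ) (y : ℝ) : psiE φ y ≠ ⊤ := by
  obtain ⟨y₀, h₀⟩ := hφ.exists_subgrad
  obtain ⟨N, hN⟩ := hφ.superlinear y
  have hc : psiE φ y ≤ ((|y - y₀| * |N| + |y₀| : ℝ) : EReal) := by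
    apply psiE_le_of hφ
    intro z hz
    rcases le_total N z with h | h
    · refine le_trans ?_ (hN z h)
      have : 0 ≤ |y - y₀| * |N| + |y₀| := by positivity
      exact_mod_cast (by linarith : y * z - (|y - y₀| * |N| + |y₀|) ≤ y * z)
    · refine le_trans ?_ (h₀ z)
      have h1 : (y - y₀) * z ≤ |y - y₀| * |N| :=
        mul_le_mul (le_abs_self _) (h.trans (le_abs_self _)) hz (abs_nonneg _)
      have h2 := le_abs_self y₀
      have h3 := neg_abs_le y₀
      exact_mod_cast (by nlinarith : y * z - (|y - y₀| * |N| + |y₀|) ≤ y₀ * (z - 1))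
  exact ne_top_of_le_ne_top (EReal.coe_ne_top _) hc

theorem coe_psiR {φ : ℝ → EReal} (hφ : IsDivergenceFunction φ) (y : ℝ) :
    ((psiR φ y : ℝ) : EReal) = psiE φ y :=
  EReal.coe_toReal (psiE_ne_top hφ y) (ne_bot_of_le_ne_bot (EReal.coe_ne_bot y) (le_psiE hφ y))

theorem le_psiR {φ : ℝ → EReal} (hφ : IsDivergenceFunction φ) (y : ℝ) : y ≤ psiR φ y := by
  have := le_psiE hφ y
  rw [← coe_psiR hφ] at this
  exact_mod_cast this

theorem psiR_mono {φ : ℝ → EReal} (hφ : IsDivergenceFunction φ) : Monotone (psiR φ) := by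
  intro a b hab
  have : psiE φ a ≤ (psiR φ b : ℝ) := by
    apply psiE_le_of hφ
    intro z hz
    have h1 := le_iSup (fun z : ℝ => (((b * z : ℝ) : EReal) - φ z)) z
    change _ ≤ psiE φ b at h1
    rw [← coe_psiR hφ] at h1
    rw [← EReal.coe_toReal ((hφ.domain z).2 hz) (hφ.ne_bot z)] at h1 ⊢
    have h2 : b * z - (φ z).toReal ≤ psiR φ b := by exact_mod_cast h1
    have h3 : a * z ≤ b * z := mul_le_mul_of_nonneg_right hab hz
    exact_mod_cast (by linarith : a * z - psiR φ b ≤ (φ z).toReal)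
  rw [← coe_psiR hφ] at this
  exact_mod_cast this

theorem exists_psiR_le {φ : ℝ → EReal} (hφ : IsDivergenceFunction φ) : ∃ y, psiR φ y ≤ y := by
  obtain ⟨y₀, h₀⟩ := hφ.exists_subgrad
  refine ⟨y₀, ?_⟩
  have : psiE φ y₀ ≤ (y₀ : EReal) := by
    apply psiE_le_of hφ
    intro z _
    have := h₀ z
    rwa [mul_sub, mul_one] at this
  rw [← coe_psiR hφ] at this
  exact_mod_cast this

theorem rhoDiv_lower (P : Measure Ω) [IsProbabilityMeasure P]
    (φ : ℝ → EReal) (hφ : IsDivergenceFunction φ) (β : ℝ) (hβ : 0 < β)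
    (X : Ω → ℝ) (hX : Integrable X P) :
    ((∫ ω, X ω ∂P : ℝ) : EReal) ≤ rhoDiv φ β P X := by
  refine le_iInf fun μ => le_iInf fun t => le_iInf fun ht => ?_
  unfold rhoObj
  split_ifs with hi
  · have h1 : ∫ ω, (X ω / t - μ) ∂P ≤ ∫ ω, psiR φ (X ω / t - μ) ∂P :=
      integral_mono ((hX.div_const t).sub (integrable_const μ)) hi fun ω => le_psiR hφ _
    rw [integral_sub (hX.div_const t) (integrable_const μ), integral_div] at h1
    simp only [integral_const, probReal_univ, one_smul] at h1
    have h2 : (∫ ω, X ω ∂P) / t ≤ β + μ + ∫ ω, psiR φ (X ω / t - μ) ∂P := by linarith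
    rw [div_le_iff₀ ht, mul_comm] at h2
    exact_mod_cast h2
  · exact le_top

theorem rhoDiv_upper (P : Measure Ω) [IsProbabilityMeasure P]
    (φ : ℝ → EReal) (hφ : IsDivergenceFunction φ) (β : ℝ) (hβ : 0 < β)
    (X : Ω → ℝ) (hX : Integrable X P) (c : ℝ) (hc : ∀ᵐ ω ∂P, X ω ≤ c) :
    rhoDiv φ β P X ≤ c := by
  obtain ⟨y, hy⟩ := exists_psiR_le hφ
  have step : ∀ t : ℝ, 0 < t → rhoDiv φ β P X ≤ ((c + t * β : ℝ) : EReal) := by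
    intro t ht
    refine (iInf_le_of_le (c / t - y) (iInf_le_of_le t (iInf_le _ ht))).trans ?_
    have hle : ∀ᵐ ω ∂P, psiR φ (X ω / t - (c / t - y)) ≤ y := by
      filter_upwards [hc] with ω hω
      refine (psiR_mono hφ ?_).trans hy
      have : X ω / t ≤ c / t := div_le_div_of_nonneg_right hω ht.le
      linarith
    have hlin : Integrable (fun ω => X ω / t - (c / t - y)) P :=
      (hX.div_const t).sub (integrable_const _)
    have hi : Integrable (fun ω => psiR φ (X ω / t - (c / t - y))) P := by
      refine integrable_of_le_of_le (g₁ := fun ω => X ω / t - (c / t - y)) (g₂ := fun _ => y)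
        ?_ (Filter.Eventually.of_forall fun ω => le_psiR hφ _) hle hlin (integrable_const y)
      exact ((psiR_mono hφ).measurable.comp_aemeasurable hlin.aemeasurable).aestronglyMeasurable
    have h1 := integral_mono_ae hi (integrable_const y) hle
    simp only [integral_const, probReal_univ, one_smul] at h1
    unfold rhoObj
    rw [if_pos hi]
    have h2 : t * (β + (c / t - y) + ∫ ω, psiR φ (X ω / t - (c / t - y)) ∂P) ≤ t * (β + c / t) :=
      mul_le_mul_of_nonneg_left (by linarith) ht.le
    have h3 : t * (β + c / t) = c + t * β := by field_simp; ring
    rw [h3] at h2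
    exact_mod_cast h2
  refine EReal.le_of_forall_lt_iff_le.1 fun z hz => ?_
  have hz' : c < z := by exact_mod_cast hz
  have := step ((z - c) / β) (div_pos (by linarith) hβ)
  rwa [div_mul_cancel₀ _ hβ.ne', add_sub_cancel] at this

/-- Bounds: `E X ≤ ρ_{φ,β}(X) ≤ esssup X`, and `ρ_{φ,β}(0) = 0`. -/
theorem rhoDiv_bounds (P : Measure Ω) [IsProbabilityMeasure P]
    (φ : ℝ → EReal) (hφ : IsDivergenceFunction φ) (β : ℝ) (hβ : 0 < β)
    (X : Ω → ℝ) (hX : Integrable X P) :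
    ((∫ ω, X ω ∂P : ℝ) : EReal) ≤ rhoDiv φ β P X ∧
    rhoDiv φ β P X ≤ essSup (fun ω => ((X ω : ℝ) : EReal)) P ∧
    rhoDiv φ β P (fun _ => (0 : ℝ)) = 0 := by
  refine ⟨rhoDiv_lower P φ hφ β hβ X hX, ?_, ?_⟩
  · refine EReal.le_of_forall_lt_iff_le.1 fun z hz => ?_
    apply rhoDiv_upper P φ hφ β hβ X hX
    filter_upwards [ae_lt_of_essSup_lt hz] with ω hω
    exact_mod_cast hω.le
  · apply le_antisymm
    · exact_mod_cast rhoDiv_upper P φ hφ β hβ (fun _ => 0) (integrable_const 0) 0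
        (Filter.Eventually.of_forall fun _ => le_rfl)
    · simpa using rhoDiv_lower P φ hφ β hβ (fun _ => 0) (integrable_const 0)
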